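/- For nonnegative integers i, j, k, the identity ∑ q^{T_s + T_{ab} + T_{ac} + T_{bc-1}} (1 - q^a + q^{a+bc}) / ((q)_a (q)_b (q)_c (q)_{ab} (q)_{ac} (q)_{bc}) = q^{T_i + T_j + T_k} / ((q)_i (q)_j (q)_k) holds as formal power series in q, where the sum is over nonnegative integers a, b, c, ab, ac, bc with i = a + ab + ac, j = b + ab + bc, k = c + ac + bc, and s = a + b + c + ab + ac + bc. -/

import Mathlib

open PowerSeries Finset

/-- Triangular number `T n = n(n+1)/2` (so `tri (bc - 1) = 0` when `bc = 0`,
matching the convention `T_{-1} = 0` via truncated subtraction). -/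
def tri (n : ℕ) : ℕ := n * (n + 1) / 2

/-- The `q`-Pochhammer symbol `(q)_n = ∏_{j=1}^n (1 - q^j)` as a formal power
series in `q` over `ℚ`. -/
noncomputable def qPoch (n : ℕ) : PowerSeries ℚ :=
  ∏ j ∈ Finset.range n, (1 - (PowerSeries.X : PowerSeries ℚ) ^ (j + 1))

/-!
Fix `j`, `k` and take the generating function in `t` over `i`. For fixed `z = bc`, with
`α = j - z` and `β = k - z`, Rothe's `q`-binomial theorem sums over `(b, ab)` and over `(c, ac)`,
giving `(-tq)_α / (q)_α` and `(-tq)_β / (q)_β`, and Euler's expansion of `(-tq^(m+1))_∞` sums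
over `a`. With `u = -tq`, what remains is the very-well-poised sum
`∑_z q^(αβ) (u)_α (u)_β (1 - u q^(α+β)) / ((q)_α (q)_β (q)_z (u)_(α+β+z+1)) = 1 / ((q)_j (q)_k)`,
which follows, by induction on `min j k`, from a Pascal-type splitting of its terms based on
`(1 - q^(α+z)) (1 - u q^(α+β)) = (1 - q^α) (1 - u q^(α+β+z)) + q^α (1 - q^z) (1 - u q^β)`.
-/

section Tri

lemma two_mul_tri (n : ℕ) : 2 * tri n = n * (n + 1) :=
  Nat.mul_div_cancel' (Nat.even_mul_succ_self n).two_dvd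

lemma tri_add (m n : ℕ) : tri (m + n) = tri m + tri n + m * n := by
  linarith [two_mul_tri m, two_mul_tri n, two_mul_tri (m + n)]

lemma tri_succ (n : ℕ) : tri (n + 1) = tri n + (n + 1) := by
  linarith [two_mul_tri n, two_mul_tri (n + 1)]

lemma tri_pred_add_self (n : ℕ) : tri (n - 1) + n = tri n := by
  cases n with
  | zero => rfl
  | succ n => exact (tri_succ n).symm

end Tri

lemma sum_antidiagonal_succ_add {M : Type*} [AddCommMonoid M] {f g : ℕ × ℕ → M}
    (hf : ∀ n, f (0, n) = 0) (hg : ∀ n, g (n, 0) = 0) (n : ℕ) :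
    ∑ p ∈ antidiagonal (n + 1), (f p + g p) =
      ∑ p ∈ antidiagonal n, (f (p.1 + 1, p.2) + g (p.1, p.2 + 1)) := by
  rw [sum_add_distrib, Finset.Nat.sum_antidiagonal_succ, Finset.Nat.sum_antidiagonal_succ',
    hf, hg, zero_add, zero_add, ← sum_add_distrib]

section QPochhammer

variable {R S : Type*} [CommRing R] [CommRing S]

/-- The `q`-Pochhammer symbol `(a; q)_n = ∏_{l < n} (1 - a q^l)` in a commutative ring. -/
def qPochhammer (a q : R) (n : ℕ) : R := ∏ l ∈ range n, (1 - a * q ^ l)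

lemma qPochhammer_zero (a q : R) : qPochhammer a q 0 = 1 :=
  prod_range_zero _

lemma qPochhammer_succ (a q : R) (n : ℕ) :
    qPochhammer a q (n + 1) = qPochhammer a q n * (1 - a * q ^ n) :=
  prod_range_succ _ n

lemma map_qPochhammer (f : R →+* S) (a q : R) (n : ℕ) :
    f (qPochhammer a q n) = qPochhammer (f a) (f q) n := by
  simp [qPochhammer]

/-- `r n` is the reciprocal `1 / (q; q)_n` for every `n`. Carrying the reciprocals as a sequence
allows coefficient rings that are not fields, such as power series rings. -/
def IsQPochhammerInverse (q : R) (r : ℕ → R) : Prop :=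
  ∀ n, qPochhammer q q n * r n = 1

namespace IsQPochhammerInverse

variable {q : R} {r : ℕ → R}

lemma apply_zero (hr : IsQPochhammerInverse q r) : r 0 = 1 := by
  simpa [qPochhammer_zero] using hr 0

lemma one_sub_mul_apply_succ (hr : IsQPochhammerInverse q r) (n : ℕ) :
    (1 - q ^ (n + 1)) * r (n + 1) = r n := by
  have h := hr (n + 1)
  rw [qPochhammer_succ] at h
  linear_combination r n * h - (1 - q ^ (n + 1)) * r (n + 1) * hr n

lemma isUnit_one_sub_pow (hr : IsQPochhammerInverse q r) (n : ℕ) : IsUnit (1 - q ^ (n + 1)) := by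
  refine IsUnit.of_mul_eq_one (r (n + 1) * qPochhammer q q n) ?_
  rw [← mul_assoc, hr.one_sub_mul_apply_succ, mul_comm, hr]

lemma map (hr : IsQPochhammerInverse q r) (f : R →+* S) :
    IsQPochhammerInverse (f q) (f ∘ r) := fun n => by
  rw [← map_qPochhammer, Function.comp_apply, ← map_mul, hr, map_one]

theorem mul_qPochhammer_eq_sum_antidiagonal (hr : IsQPochhammerInverse q r) (v : R) (n : ℕ) :
    r n * qPochhammer (-(v * q)) q n =
      ∑ p ∈ antidiagonal n, q ^ tri p.1 * r p.1 * r p.2 * v ^ p.1 := by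
  induction n with
  | zero => simp [qPochhammer_zero, hr.apply_zero, tri]
  | succ n ih =>
    apply (hr.isUnit_one_sub_pow n).mul_left_cancel
    let fstPart : ℕ × ℕ → R := fun p =>
      q ^ (p.2 + tri p.1) * ((1 - q ^ p.1) * r p.1) * r p.2 * v ^ p.1
    let sndPart : ℕ × ℕ → R := fun p =>
      q ^ tri p.1 * r p.1 * ((1 - q ^ p.2) * r p.2) * v ^ p.1
    calc (1 - q ^ (n + 1)) * (r (n + 1) * qPochhammer (-(v * q)) q (n + 1))
        = (1 + v * q ^ (n + 1)) * (r n * qPochhammer (-(v * q)) q n) := by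
          rw [← mul_assoc, hr.one_sub_mul_apply_succ, qPochhammer_succ]; ring
      _ = ∑ p ∈ antidiagonal n, (fstPart (p.1 + 1, p.2) + sndPart (p.1, p.2 + 1)) := by
          rw [ih, mul_sum]
          refine sum_congr rfl fun p hp => ?_
          simp only [fstPart, sndPart, ← mem_antidiagonal.mp hp, hr.one_sub_mul_apply_succ,
            tri_succ]
          ring
      _ = ∑ p ∈ antidiagonal (n + 1), (fstPart p + sndPart p) :=
          (sum_antidiagonal_succ_add (by simp [fstPart]) (by simp [sndPart]) n).symm
      _ = (1 - q ^ (n + 1)) *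
            ∑ p ∈ antidiagonal (n + 1), q ^ tri p.1 * r p.1 * r p.2 * v ^ p.1 := by
          rw [mul_sum]
          refine sum_congr rfl fun p hp => ?_
          simp only [fstPart, sndPart, ← mem_antidiagonal.mp hp]
          ring

end IsQPochhammerInverse

end QPochhammer

section WellPoised

variable {R : Type*} [CommRing R] {q u : R} {r E : ℕ → R}

lemma qPochhammer_mul_of_eq_mul_succ (hE : ∀ n, E n = (1 - u * q ^ n) * E (n + 1)) (n : ℕ) :
    qPochhammer u q n * E n = E 0 := by
  induction n with
  | zero => rw [qPochhammer_zero, one_mul]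
  | succ n ih => rw [qPochhammer_succ, mul_assoc, ← hE, ih]

/-- The summand `q^(αβ) (u)_α (u)_β (1 - u q^(α+β)) / ((q)_α (q)_β (q)_z (u)_(α+β+z+1))` of the
very-well-poised sum. Here `r n` stands for `1 / (q)_n`, and `E n` for `1 / (u)_n` up to a factor
that does not depend on `n`, such as `(u q^n)_∞`. -/
def wellPoisedTerm (q u : R) (r E : ℕ → R) (α β z : ℕ) : R :=
  q ^ (α * β) * (r α * r β * r z) * (qPochhammer u q α * qPochhammer u q β) *
    ((1 - u * q ^ (α + β)) * E (α + β + z + 1))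

lemma wellPoisedTerm_comm (q u : R) (r E : ℕ → R) (α β z : ℕ) :
    wellPoisedTerm q u r E α β z = wellPoisedTerm q u r E β α z := by
  rw [wellPoisedTerm, wellPoisedTerm, mul_comm α β, add_comm α β]
  ring

lemma sum_antidiagonal_wellPoisedTerm (hr : IsQPochhammerInverse q r)
    (hE : ∀ n, E n = (1 - u * q ^ n) * E (n + 1)) (j d : ℕ) :
    ∑ p ∈ antidiagonal j, wellPoisedTerm q u r E p.2 (p.2 + d) p.1 = r j * r (j + d) * E 0 := by
  induction j generalizing d with
  | zero =>
    simp [wellPoisedTerm, ← hE, qPochhammer_zero, hr.apply_zero, mul_assoc,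
      qPochhammer_mul_of_eq_mul_succ hE]
  | succ j ih =>
    apply (hr.isUnit_one_sub_pow j).mul_left_cancel
    let fstPart : ℕ × ℕ → R := fun p =>
      q ^ (p.2 * (p.2 + d + 1)) * (r p.2 * r (p.2 + d) * ((1 - q ^ p.1) * r p.1)) *
        (qPochhammer u q p.2 * qPochhammer u q (p.2 + d + 1)) * E (p.2 + (p.2 + d) + p.1 + 1)
    let sndPart : ℕ × ℕ → R := fun p =>
      q ^ (p.2 * (p.2 + d)) * ((1 - q ^ p.2) * r p.2 * r (p.2 + d) * r p.1) *
        (qPochhammer u q p.2 * qPochhammer u q (p.2 + d)) * E (p.2 + (p.2 + d) + p.1)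
    calc (1 - q ^ (j + 1)) * ∑ p ∈ antidiagonal (j + 1), wellPoisedTerm q u r E p.2 (p.2 + d) p.1
        = ∑ p ∈ antidiagonal (j + 1), (fstPart p + sndPart p) := by
          rw [mul_sum]
          refine sum_congr rfl fun p hp => ?_
          simp only [fstPart, sndPart, wellPoisedTerm, ← mem_antidiagonal.mp hp, qPochhammer_succ,
            hE (p.2 + (p.2 + d) + p.1)]
          ring
      _ = ∑ p ∈ antidiagonal j, (fstPart (p.1 + 1, p.2) + sndPart (p.1, p.2 + 1)) :=
          sum_antidiagonal_succ_add (by simp [fstPart]) (by simp [sndPart]) j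
      _ = ∑ p ∈ antidiagonal j, wellPoisedTerm q u r E p.2 (p.2 + (d + 1)) p.1 := by
          refine sum_congr rfl fun p _ => ?_
          have index_fst : p.2 + (p.2 + d) + (p.1 + 1) + 1 =
              p.2 + (p.2 + (d + 1)) + p.1 + 1 := by ring
          have index_snd : p.2 + 1 + (p.2 + d + 1) + p.1 =
              p.2 + (p.2 + (d + 1)) + p.1 + 1 := by ring
          have index_β : p.2 + 1 + d = p.2 + d + 1 := by ring
          simp only [fstPart, sndPart, wellPoisedTerm, hr.one_sub_mul_apply_succ, index_fst,
            index_snd, index_β]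
          simp only [← add_assoc, qPochhammer_succ, ← hr.one_sub_mul_apply_succ (p.2 + d)]
          ring
      _ = (1 - q ^ (j + 1)) * (r (j + 1) * r (j + 1 + d) * E 0) := by
          rw [ih, ← hr.one_sub_mul_apply_succ j, add_right_comm j 1 d, add_assoc j d 1]
          ring

theorem sum_range_wellPoisedTerm (hr : IsQPochhammerInverse q r)
    (hE : ∀ n, E n = (1 - u * q ^ n) * E (n + 1)) (j k : ℕ) :
    ∑ z ∈ range (min j k + 1), wellPoisedTerm q u r E (j - z) (k - z) z = r j * r k * E 0 := by
  wlog hjk : j ≤ k generalizing j k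
  · rw [min_comm, mul_comm (r j), ← this k j (le_of_not_ge hjk)]
    exact sum_congr rfl fun z _ => wellPoisedTerm_comm ..
  obtain ⟨d, rfl⟩ := Nat.exists_eq_add_of_le hjk
  rw [min_eq_left hjk, ← sum_antidiagonal_wellPoisedTerm hr hE,
    Finset.Nat.sum_antidiagonal_eq_sum_range_succ_mk]
  refine sum_congr rfl fun z hz => ?_
  rw [Nat.sub_add_comm (mem_range_succ_iff.mp hz)]

end WellPoised

section GeneratingFunction

variable {R : Type*} [CommRing R] {q : R} {r : ℕ → R}

/-- Euler's expansion `∑_n q^(T_n + m n) t^n / (q)_n` of `(-t q^(m+1))_∞` as a power series in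
`t`, where `r n` stands for `1 / (q)_n`. -/
def eulerSeries (q : R) (r : ℕ → R) (m : ℕ) : R⟦X⟧ :=
  PowerSeries.mk fun n => q ^ (tri n + m * n) * r n

lemma coeff_eulerSeries (q : R) (r : ℕ → R) (m n : ℕ) :
    coeff n (eulerSeries q r m) = q ^ (tri n + m * n) * r n :=
  coeff_mk ..

lemma eulerSeries_eq_mul_succ (hr : IsQPochhammerInverse q r) (m : ℕ) :
    eulerSeries q r m = (1 - -(X * C q) * C q ^ m) * eulerSeries q r (m + 1) := by
  have expand : (1 - -(X * C q) * C q ^ m) * eulerSeries q r (m + 1) =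
      eulerSeries q r (m + 1) + X * (C (q ^ (m + 1)) * eulerSeries q r (m + 1)) := by
    rw [map_pow]; ring
  ext n
  rw [expand, map_add]
  cases n with
  | zero => simp [coeff_eulerSeries]
  | succ n =>
    rw [coeff_succ_X_mul, coeff_C_mul]
    simp only [coeff_eulerSeries, tri_succ, ← hr.one_sub_mul_apply_succ n]
    ring

lemma coeff_eulerSeries_sub_eulerSeries (q : R) (r : ℕ → R) (m z n : ℕ) :
    coeff n (eulerSeries q r m - C (1 - q ^ z) * eulerSeries q r (m + 1)) =
      q ^ (tri n + m * n) * r n * (1 - q ^ n + q ^ (n + z)) := by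
  rw [map_sub, coeff_C_mul, coeff_eulerSeries, coeff_eulerSeries]
  ring

/-- The generating function in `t` of the terms of the key identity with given `bc = z`,
`b + ab = α` and `c + ac = β`, where `r n` stands for `1 / (q)_n`. -/
noncomputable def keySeries (q : R) (r : ℕ → R) (α β z : ℕ) : R⟦X⟧ :=
  C (q ^ (tri (α + β + z) + tri (z - 1)) * r z) *
    ((C (r α) * qPochhammer (-(X * C q)) (C q) α) * (C (r β) * qPochhammer (-(X * C q)) (C q) β)) *
    (eulerSeries q r (α + β + z) - C (1 - q ^ z) * eulerSeries q r (α + β + z + 1))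

lemma keySeries_eq_wellPoisedTerm (hr : IsQPochhammerInverse q r) (α β z : ℕ) :
    keySeries q r α β z = C (q ^ (tri (α + z) + tri (β + z))) *
      wellPoisedTerm (C q) (-(X * C q)) (C ∘ r) (eulerSeries q r) α β z := by
  have exponent : tri (α + z) + tri (β + z) + α * β = tri (α + β + z) + tri (z - 1) + z := by
    rw [add_assoc (tri (α + β + z)), tri_pred_add_self]
    simp only [tri_add]
    ring
  have powers : (C q : R⟦X⟧) ^ (tri (α + z) + tri (β + z)) * C q ^ (α * β) =
      C q ^ (tri (α + β + z) + tri (z - 1)) * C q ^ z := by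
    rw [← pow_add, exponent, pow_add]
  rw [keySeries, wellPoisedTerm, eulerSeries_eq_mul_succ hr (α + β + z)]
  simp only [map_mul, map_pow, map_sub, map_one, Function.comp_apply]
  generalize eulerSeries q r (α + β + z + 1) = E
  generalize qPochhammer (-(X * C q)) (C q) α = A, qPochhammer (-(X * C q)) (C q) β = B
  linear_combination -(C (r α) * C (r β) * C (r z) * (A * B) *
    ((1 - -(X * C q) * C q ^ (α + β)) * E)) * powers

theorem sum_keySeries (hr : IsQPochhammerInverse q r) (j k : ℕ) :
    ∑ z ∈ range (min j k + 1), keySeries q r (j - z) (k - z) z =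
      C (q ^ (tri j + tri k) * r j * r k) * eulerSeries q r 0 := by
  have h := sum_range_wellPoisedTerm (hr.map C) (eulerSeries_eq_mul_succ hr) j k
  calc ∑ z ∈ range (min j k + 1), keySeries q r (j - z) (k - z) z
      = ∑ z ∈ range (min j k + 1), C (q ^ (tri j + tri k)) *
          wellPoisedTerm (C q) (-(X * C q)) (C ∘ r) (eulerSeries q r) (j - z) (k - z) z := by
        refine sum_congr rfl fun z hz => ?_
        obtain ⟨hj, hk⟩ := le_min_iff.mp (mem_range_succ_iff.mp hz)
        rw [keySeries_eq_wellPoisedTerm hr, Nat.sub_add_cancel hj, Nat.sub_add_cancel hk]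
    _ = C (q ^ (tri j + tri k) * r j * r k) * eulerSeries q r 0 := by
        rw [← mul_sum, h]
        simp only [map_mul, Function.comp_apply]
        ring

/-- The summand of the key identity, where `r n` stands for `1 / (q)_n`. The variables `x`, `y`,
`z` are the paper's `ab`, `ac`, `bc`. -/
def keyTerm (q : R) (r : ℕ → R) (a b c x y z : ℕ) : R :=
  q ^ (tri (a + b + c + x + y + z) + tri x + tri y + tri (z - 1)) *
    (1 - q ^ a + q ^ (a + z)) * (r a * r b * r c * r x * r y * r z)

lemma coeff_keySeries (hr : IsQPochhammerInverse q r) (i α β z : ℕ) :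
    coeff i (keySeries q r α β z) =
      ∑ p ∈ antidiagonal α, ∑ s ∈ antidiagonal β,
        if p.1 + s.1 ≤ i then keyTerm q r (i - (p.1 + s.1)) p.2 s.2 p.1 s.1 z else 0 := by
  have hC := hr.map (C : R →+* R⟦X⟧)
  have expand : keySeries q r α β z = ∑ p ∈ antidiagonal α, ∑ s ∈ antidiagonal β,
      C (q ^ (tri (α + β + z) + tri (z - 1) + tri p.1 + tri s.1) *
        (r p.2 * r s.2 * r p.1 * r s.1 * r z)) * (X ^ (p.1 + s.1) *
        (eulerSeries q r (α + β + z) - C (1 - q ^ z) * eulerSeries q r (α + β + z + 1))) := by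
    have hα := hC.mul_qPochhammer_eq_sum_antidiagonal X α
    have hβ := hC.mul_qPochhammer_eq_sum_antidiagonal X β
    simp only [Function.comp_apply] at hα hβ
    rw [keySeries, hα, hβ, sum_mul_sum]
    simp only [mul_sum, sum_mul]
    refine sum_congr rfl fun p _ => sum_congr rfl fun s _ => ?_
    simp only [map_mul, map_pow]
    ring
  simp only [expand, map_sum, coeff_C_mul, coeff_X_pow_mul']
  refine sum_congr rfl fun p hp => sum_congr rfl fun s hs => ?_
  split_ifs with h
  · have total : i - (p.1 + s.1) + p.2 + s.2 + p.1 + s.1 + z =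
        i - (p.1 + s.1) + (α + β + z) := by
      rw [← mem_antidiagonal.mp hp, ← mem_antidiagonal.mp hs]; ring
    rw [keyTerm, total, tri_add (i - (p.1 + s.1)), coeff_eulerSeries_sub_eulerSeries]
    ring
  · exact mul_zero _

end GeneratingFunction

lemma sum_ite_eq_sum_antidiagonal {M : Type*} [AddCommMonoid M] (i j k : ℕ)
    (f : ℕ → ℕ → ℕ → ℕ → ℕ → ℕ → M) :
    (∑ a ∈ range (i + 1), ∑ b ∈ range (j + 1), ∑ c ∈ range (k + 1),
      ∑ x ∈ range (i + 1), ∑ y ∈ range (i + 1), ∑ z ∈ range (j + 1),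
        if i = a + x + y ∧ j = b + x + z ∧ k = c + y + z then f a b c x y z else 0) =
      ∑ z ∈ range (min j k + 1), ∑ p ∈ antidiagonal (j - z), ∑ s ∈ antidiagonal (k - z),
        if p.1 + s.1 ≤ i then f (i - (p.1 + s.1)) p.2 s.2 p.1 s.1 z else 0 := by
  conv_lhs => simp only [← sum_product']
  conv_rhs => simp only [sum_sigma']
  rw [← sum_filter, ← sum_filter]
  refine sum_nbij'
    (fun | (_, b, c, x, y, z) => ⟨z, (x, b), (y, c)⟩)
    (fun | ⟨z, (x, b), (y, c)⟩ => (i - (x + y), b, c, x, y, z)) ?_ ?_ ?_ ?_ ?_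
  · rintro ⟨a, b, c, x, y, z⟩
    simp only [mem_filter, mem_product, mem_sigma, mem_range,
      HasAntidiagonal.mem_antidiagonal]
    omega
  · rintro ⟨z, ⟨x, b⟩, y, c⟩
    simp only [mem_filter, mem_product, mem_sigma, mem_range,
      HasAntidiagonal.mem_antidiagonal]
    omega
  · rintro ⟨a, b, c, x, y, z⟩ h
    simp only [mem_filter, Prod.mk.injEq, and_true] at h ⊢
    omega
  · exact fun _ _ => rfl
  · rintro ⟨a, b, c, x, y, z⟩ h
    simp only [mem_filter] at h ⊢
    rw [h.2.1, add_assoc, Nat.add_sub_cancel]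

theorem alladi_andrews_gordon_key_identity_general {R : Type*} [CommRing R] {q : R} {r : ℕ → R}
    (hr : IsQPochhammerInverse q r) (i j k : ℕ) :
    (∑ a ∈ range (i + 1), ∑ b ∈ range (j + 1), ∑ c ∈ range (k + 1),
      ∑ ab ∈ range (i + 1), ∑ ac ∈ range (i + 1), ∑ bc ∈ range (j + 1),
        if i = a + ab + ac ∧ j = b + ab + bc ∧ k = c + ac + bc then
          q ^ (tri (a + b + c + ab + ac + bc) + tri ab + tri ac + tri (bc - 1)) *
            (1 - q ^ a + q ^ (a + bc)) * (r a * r b * r c * r ab * r ac * r bc)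
        else 0) =
      q ^ (tri i + tri j + tri k) * (r i * r j * r k) := by
  have h := congrArg (coeff i) (sum_keySeries hr j k)
  simp only [map_sum, coeff_keySeries hr, coeff_C_mul, coeff_eulerSeries] at h
  refine (sum_ite_eq_sum_antidiagonal i j k (keyTerm q r)).trans (h.trans ?_)
  ring

lemma isQPochhammerInverse_inv_qPoch :
    IsQPochhammerInverse (X : ℚ⟦X⟧) fun n => (qPoch n)⁻¹ := fun n => by
  have h : qPochhammer (X : ℚ⟦X⟧) X n = qPoch n :=
    prod_congr rfl fun l _ => by rw [pow_succ']
  rw [h]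
  exact PowerSeries.mul_inv_cancel _ (by simp [qPoch, map_prod])

/-- The three parameter key identity for Göllnitz's theorem
(Alladi--Andrews--Gordon): for nonnegative integers `i, j, k`,
`∑ q^{T_s+T_{ab}+T_{ac}+T_{bc-1}} (1 - q^a + q^{a+bc}) / ((q)_a (q)_b (q)_c (q)_{ab} (q)_{ac} (q)_{bc})
  = q^{T_i+T_j+T_k} / ((q)_i (q)_j (q)_k)`,
summed over nonnegative `a, b, c, ab, ac, bc` with `i = a+ab+ac`, `j = b+ab+bc`,
`k = c+ac+bc`, where `s = a+b+c+ab+ac+bc`. -/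
theorem alladi_andrews_gordon_key_identity (i j k : ℕ) :
    (∑ a ∈ Finset.range (i + 1), ∑ b ∈ Finset.range (j + 1),
      ∑ c ∈ Finset.range (k + 1), ∑ ab ∈ Finset.range (i + 1),
      ∑ ac ∈ Finset.range (i + 1), ∑ bc ∈ Finset.range (j + 1),
        if i = a + ab + ac ∧ j = b + ab + bc ∧ k = c + ac + bc then
          (PowerSeries.X : PowerSeries ℚ) ^
              (tri (a + b + c + ab + ac + bc) + tri ab + tri ac + tri (bc - 1)) *
            (1 - (PowerSeries.X : PowerSeries ℚ) ^ a +
              (PowerSeries.X : PowerSeries ℚ) ^ (a + bc)) *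
            (qPoch a * qPoch b * qPoch c * qPoch ab * qPoch ac * qPoch bc)⁻¹
        else 0)
    = (PowerSeries.X : PowerSeries ℚ) ^ (tri i + tri j + tri k) *
        (qPoch i * qPoch j * qPoch k)⁻¹ := by
  have mul_inv (f g : ℚ⟦X⟧) : (f * g)⁻¹ = f⁻¹ * g⁻¹ := by
    rw [PowerSeries.mul_inv_rev, mul_comm]
  simpa only [mul_inv] using
    alladi_andrews_gordon_key_identity_general isQPochhammerInverse_inv_qPoch i j k
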